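/- Let Φ be a reduced irreducible root system and let σ be a nonzero dominant weight lying in the root lattice, i.e., σ ∈ X⁺ ∩ ℤΦ with σ ≠ 0. Then (σ, α₀∨) ≥ 2, where α₀ is the highest short root of Φ (so that α₀∨ is the highest root of the dual root system Φ∨). Equivalently, there exists a positive root α ∈ Φ⁺ with (σ, α∨) ≥ 2. -/

import Mathlib

/-!
Suppose `(σ, α₀∨) < 2`. Then `(σ, β∨) < 2` for every root `β` (`inner_lt_of_highest`): for `β` of
the same length as `α₀` this holds because `α₀ - β` is a nonnegative combination of simple roots
and `σ` is dominant. A longer `β` is not orthogonal to some root `γ` of the length of `α₀`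
(irreducibility, `exists_short_not_orthogonal`); replacing `γ` by `-γ`, one has `(γ, β∨) = 1`, so
`β = γ + (β - γ)` is a sum of two roots of the length of `α₀`, while `(β, β) ≥ 2 (α₀, α₀)`.

A vector `σ` of the root lattice with `(σ, β∨) < 2` for all roots `β` is zero
(`eq_zero_of_inner_lt`). Write `σ` as a sum of roots with as few terms as possible. For
any term `β`, since `(σ, β∨) < 2 = (β, β∨)`, another term `γ` has `(γ, β) < 0`; then `β + γ` is a
root or zero, giving a shorter sum. So there are no terms at all.
-/

open scoped RealInnerProductSpace

namespace PaperDNN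

variable {E : Type*} [NormedAddCommGroup E] [InnerProductSpace ℝ E]

/-- The coroot pairing `⟨x, α∨⟩ = 2⟪x,α⟫/⟪α,α⟫`. -/
noncomputable def pair (x a : E) : ℝ := 2 * ⟪x, a⟫ / ⟪a, a⟫

/-- `Φ` is a reduced irreducible root system in the Euclidean space `E`. -/
structure IsRootSystem (Φ : Finset E) : Prop where
  nonempty : Φ.Nonempty
  ne_zero : ∀ α ∈ Φ, α ≠ 0
  span_top : Submodule.span ℝ (Φ : Set E) = ⊤
  reduced : ∀ α ∈ Φ, ∀ t : ℝ, t • α ∈ Φ → t = 1 ∨ t = -1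
  reflect_mem : ∀ α ∈ Φ, ∀ β ∈ Φ, β - pair β α • α ∈ Φ
  pair_int : ∀ α ∈ Φ, ∀ β ∈ Φ, ∃ n : ℤ, pair β α = (n : ℝ)
  irred : ∀ S T : Set E, S ∪ T = (Φ : Set E) → S.Nonempty → T.Nonempty →
      (∀ a ∈ S, ∀ b ∈ T, ⟪a, b⟫ = 0) → False

/-- `Δ` is a base of simple roots for `Φ`: every root is a nonnegative or
nonpositive integral combination of the simple roots. -/
structure IsBase (Φ Δ : Finset E) : Prop where
  subset : Δ ⊆ Φ
  indep : LinearIndependent ℝ (fun a : {x // x ∈ Δ} => (a : E))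
  root_decomp : ∀ β ∈ Φ, (∃ c : E → ℕ, β = ∑ α ∈ Δ, (c α : ℝ) • α) ∨
      (∃ c : E → ℕ, β = -(∑ α ∈ Δ, (c α : ℝ) • α))

open Classical in
/-- The positive roots `Φ⁺` of `Φ` with respect to the base `Δ`. -/
noncomputable def posRoots (Φ Δ : Finset E) : Finset E :=
  Φ.filter fun β => ∃ c : E → ℕ, β = ∑ α ∈ Δ, (c α : ℝ) • α

/-- `ρ`, one-half the sum of the positive roots. -/
noncomputable def rho (Φ Δ : Finset E) : E := (2⁻¹ : ℝ) • ∑ β ∈ posRoots Φ Δ, β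

/-- The Weyl group of `Φ`, the subgroup of `GL(E)` generated by the reflections
`s_α : x ↦ x − ⟨x,α∨⟩α` in the roots `α ∈ Φ`.  Applied to a subset `J` of the
simple roots it yields the parabolic subgroup `W_J`. -/
def Weyl (Φ : Finset E) : Subgroup (E ≃ₗ[ℝ] E) :=
  Subgroup.closure { w : E ≃ₗ[ℝ] E | ∃ α ∈ Φ, ∀ x, w x = x - pair x α • α }

/-- The dot action `w·λ = w(λ+ρ) − ρ`. -/
noncomputable def dotAct (Φ Δ : Finset E) (w : E ≃ₗ[ℝ] E) (lam : E) : E :=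
  w (lam + rho Φ Δ) - rho Φ Δ

/-- The weight lattice `X = {λ ∈ E : ⟨λ,α∨⟩ ∈ ℤ for all α ∈ Φ}`. -/
def weightLattice (Φ : Finset E) : Set E :=
  { lam | ∀ α ∈ Φ, ∃ n : ℤ, pair lam α = (n : ℝ) }

/-- The root lattice `ℤΦ`. -/
def rootLattice (Φ : Finset E) : AddSubgroup E := AddSubgroup.closure (Φ : Set E)

/-- The bottom `p`-alcove `C_ℤ = {λ ∈ X : 0 < ⟨λ+ρ,β∨⟩ < p for all β ∈ Φ⁺}`. -/
def bottomAlcove (Φ Δ : Finset E) (p : ℕ) : Set E :=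
  { lam ∈ weightLattice Φ | ∀ β ∈ posRoots Φ Δ,
      0 < pair (lam + rho Φ Δ) β ∧ pair (lam + rho Φ Δ) β < (p : ℝ) }

/-- The closure `C̄_ℤ = {λ ∈ X : 0 ≤ ⟨λ+ρ,β∨⟩ ≤ p for all β ∈ Φ⁺}` of the
bottom `p`-alcove. -/
def closedAlcove (Φ Δ : Finset E) (p : ℕ) : Set E :=
  { lam ∈ weightLattice Φ | ∀ β ∈ posRoots Φ Δ,
      0 ≤ pair (lam + rho Φ Δ) β ∧ pair (lam + rho Φ Δ) β ≤ (p : ℝ) }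

/-- Membership in `X⁺`, the set of dominant weights. -/
def isDominant (Φ Δ : Finset E) (lam : E) : Prop :=
  lam ∈ weightLattice Φ ∧ ∀ α ∈ Δ, 0 ≤ pair lam α

/-- `a₀` is the highest short root of `Φ`: a root of minimal length such that
every root of the same length is `≤ a₀` (their difference is a nonnegative
integral combination of simple roots). -/
structure IsHighestShortRoot (Φ Δ : Finset E) (a₀ : E) : Prop where
  mem : a₀ ∈ Φ
  short : ∀ β ∈ Φ, ⟪a₀, a₀⟫ ≤ ⟪β, β⟫
  highest : ∀ β ∈ Φ, ⟪β, β⟫ = ⟪a₀, a₀⟫ →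
      ∃ c : E → ℕ, a₀ - β = ∑ α ∈ Δ, (c α : ℝ) • α


theorem inner_self_pos {Φ : Finset E} (hΦ : IsRootSystem Φ) {a : E} (ha : a ∈ Φ) :
    0 < ⟪a, a⟫ :=
  real_inner_self_pos.2 (hΦ.ne_zero a ha)

theorem neg_mem {Φ : Finset E} (hΦ : IsRootSystem Φ) {a : E} (ha : a ∈ Φ) : -a ∈ Φ := by
  have h := hΦ.reflect_mem a ha a ha
  have h0 := (inner_self_pos hΦ ha).ne'
  have h2 : pair a a = 2 := by
    unfold pair
    field_simp
  rw [h2, two_smul] at h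
  simpa using h

theorem pair_mul {Φ : Finset E} (hΦ : IsRootSystem Φ) {a : E} (ha : a ∈ Φ) (x : E) :
    pair x a * ⟪a, a⟫ = 2 * ⟪x, a⟫ := by
  have h0 := (inner_self_pos hΦ ha).ne'
  unfold pair
  field_simp

theorem reflect_inner_self {Φ : Finset E} (hΦ : IsRootSystem Φ) {a : E} (ha : a ∈ Φ) (x : E) :
    ⟪x - pair x a • a, x - pair x a • a⟫ = ⟪x, x⟫ := by
  have h := pair_mul hΦ ha x
  simp only [inner_sub_left, inner_sub_right, real_inner_smul_left, real_inner_smul_right]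
  rw [real_inner_comm x a]
  linear_combination (pair x a) * h

theorem add_mem_or_eq_zero {Φ : Finset E} (hΦ : IsRootSystem Φ) {a b : E} (ha : a ∈ Φ)
    (hb : b ∈ Φ) (hab : ⟪a, b⟫ < 0) : a + b ∈ Φ ∨ a + b = 0 := by
  have hA := inner_self_pos hΦ ha
  have hB := inner_self_pos hΦ hb
  obtain ⟨p, hp⟩ := hΦ.pair_int b hb a ha
  obtain ⟨q, hq⟩ := hΦ.pair_int a ha b hb
  have h1 := pair_mul hΦ hb a
  have h2 := pair_mul hΦ ha b
  rw [real_inner_comm a b] at h2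
  have r1 := hΦ.reflect_mem b hb a ha
  have r2 := hΦ.reflect_mem a ha b hb
  rw [hp] at h1 r1
  rw [hq] at h2 r2
  have hp0 : p < 0 := by
    by_contra! h
    have : (0 : ℝ) ≤ p := by exact_mod_cast h
    nlinarith
  have hq0 : q < 0 := by
    by_contra! h
    have : (0 : ℝ) ≤ q := by exact_mod_cast h
    nlinarith
  by_cases hp1 : p = -1
  · left
    simpa [hp1] using r1
  by_cases hq1 : q = -1
  · left
    rw [add_comm]
    simpa [hq1] using r2
  -- Both Cartan integers are at most `-2`, which forces `(a + b, a + b) ≤ 0`.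
  right
  have hp2 : (p : ℝ) ≤ -2 := by exact_mod_cast (by lia : p ≤ -2)
  have hq2 : (q : ℝ) ≤ -2 := by exact_mod_cast (by lia : q ≤ -2)
  have h3 : ⟪a + b, a + b⟫ ≤ 0 := by
    rw [real_inner_add_add_self]
    nlinarith
  exact real_inner_self_nonpos.1 h3

theorem inner_multiset_sum_nonneg (x : E) (m : Multiset E) (h : ∀ b ∈ m, 0 ≤ ⟪x, b⟫) :
    0 ≤ ⟪x, m.sum⟫ := by
  induction m using Multiset.induction with
  | empty => simp
  | cons a s ih =>
    rw [Multiset.sum_cons, inner_add_right]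
    exact add_nonneg (h a (by simp)) (ih fun b hb => h b (by simp [hb]))

theorem multiset_sum_eq_zero {Φ : Finset E} (hΦ : IsRootSystem Φ) {σ : E}
    (hσ : ∀ β ∈ Φ, ⟪σ, β⟫ < ⟪β, β⟫) (n : ℕ) :
    ∀ m : Multiset E, m.card = n → (∀ b ∈ m, b ∈ Φ) → m.sum = σ → σ = 0 := by
  induction n using Nat.strong_induction_on with
  | _ n ih =>
    intro m hn hm hs
    by_contra hne
    obtain ⟨β, hβ⟩ : ∃ b, b ∈ m := by
      refine Multiset.exists_mem_of_ne_zero ?_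
      rintro rfl
      exact hne (by simpa using hs.symm)
    obtain ⟨t, rfl⟩ := Multiset.exists_cons_of_mem hβ
    have hβΦ := hm β hβ
    have h2 : ∃ c ∈ t, ⟪β, c⟫ < 0 := by
      by_contra! h
      have h3 := inner_multiset_sum_nonneg β t h
      have h4 := hσ β hβΦ
      rw [← hs, Multiset.sum_cons, inner_add_left, real_inner_comm β t.sum] at h4
      linarith
    obtain ⟨γ, hγ, hneg⟩ := h2
    obtain ⟨u, rfl⟩ := Multiset.exists_cons_of_mem hγ
    have hu : ∀ b ∈ u, b ∈ Φ := fun b hb => hm b (by simp [hb])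
    have hs' : β + γ + u.sum = σ := by
      rw [← hs]
      simp [add_assoc]
    simp only [Multiset.card_cons] at hn
    rcases add_mem_or_eq_zero hΦ hβΦ (hm γ (by simp)) hneg with h | h
    · refine hne (ih (u.card + 1) (by lia) ((β + γ) ::ₘ u) (by simp) ?_ (by simpa using hs'))
      intro b hb
      rcases Multiset.mem_cons.1 hb with rfl | hb
      · exact h
      · exact hu b hb
    · rw [h, zero_add] at hs'
      exact hne (ih u.card (by lia) u rfl hu hs')

/-- The hypothesis says `(σ, β∨) < 2` for all roots `β`. -/
theorem eq_zero_of_inner_lt {Φ : Finset E} (hΦ : IsRootSystem Φ) {σ : E}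
    (hσΦ : σ ∈ rootLattice Φ) (hσ : ∀ β ∈ Φ, ⟪σ, β⟫ < ⟪β, β⟫) : σ = 0 := by
  unfold rootLattice at hσΦ
  rw [← AddSubgroup.mem_toAddSubmonoid, AddSubgroup.closure_toAddSubmonoid] at hσΦ
  obtain ⟨m, hm, hs⟩ := AddSubmonoid.exists_multiset_of_mem_closure hσΦ
  refine multiset_sum_eq_zero hΦ hσ _ m rfl (fun b hb => ?_) hs
  rcases hm b hb with h | h
  · exact h
  · simpa using neg_mem hΦ (Set.mem_neg.1 h)

/-- The roots orthogonal to all roots of the length of `a` are orthogonal to all other roots,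
because reflections permute the roots of a given length. So irreducibility leaves none. -/
theorem exists_short_not_orthogonal {Φ : Finset E} (hΦ : IsRootSystem Φ) {a β : E} (ha : a ∈ Φ)
    (hβ : β ∈ Φ) : ∃ γ ∈ Φ, ⟪γ, γ⟫ = ⟪a, a⟫ ∧ ⟪γ, β⟫ ≠ 0 := by
  by_contra! hcon
  refine hΦ.irred {s | s ∈ Φ ∧ ∀ γ ∈ Φ, ⟪γ, γ⟫ = ⟪a, a⟫ → ⟪γ, s⟫ = 0}
    {t | t ∈ Φ ∧ ∃ γ ∈ Φ, ⟪γ, γ⟫ = ⟪a, a⟫ ∧ ⟪γ, t⟫ ≠ 0} ?_ ⟨β, hβ, hcon⟩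
    ⟨a, ha, a, ha, rfl, (inner_self_pos hΦ ha).ne'⟩ ?_
  · ext x
    simp only [Set.mem_union, Set.mem_ofPred_eq, Finset.mem_coe]
    constructor
    · rintro (h | h) <;> exact h.1
    · intro hx
      by_cases h : ∀ γ ∈ Φ, ⟪γ, γ⟫ = ⟪a, a⟫ → ⟪γ, x⟫ = 0
      · exact Or.inl ⟨hx, h⟩
      · push Not at h
        exact Or.inr ⟨hx, h⟩
  · rintro s ⟨-, hs⟩ t ⟨ht, γ, hγ, hγa, hγt⟩
    have h1 := hs _ (hΦ.reflect_mem t ht γ hγ) ((reflect_inner_self hΦ ht γ).trans hγa)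
    rw [inner_sub_left, hs γ hγ hγa, real_inner_smul_left, zero_sub, neg_eq_zero,
      mul_eq_zero] at h1
    rcases h1 with h1 | h1
    · have h2 := pair_mul hΦ ht γ
      rw [h1, zero_mul] at h2
      exact absurd (by linarith) hγt
    · rwa [real_inner_comm]

theorem inner_nonneg_of_dominant {Φ Δ : Finset E} (hΦ : IsRootSystem Φ) (hΔ : IsBase Φ Δ) {σ : E}
    (hdom : isDominant Φ Δ σ) (c : E → ℕ) : 0 ≤ ⟪σ, ∑ α ∈ Δ, (c α : ℝ) • α⟫ := by
  rw [inner_sum]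
  refine Finset.sum_nonneg fun α hα => ?_
  rw [real_inner_smul_right]
  have h1 := pair_mul hΦ (hΔ.subset hα) σ
  have h2 := mul_nonneg (hdom.2 α hα) (inner_self_pos hΦ (hΔ.subset hα)).le
  exact mul_nonneg (Nat.cast_nonneg _) (by linarith)

/-- The bound `(σ, α₀∨) < 2` for the highest short root `α₀` propagates to all roots. -/
theorem inner_lt_of_highest {Φ Δ : Finset E} (hΦ : IsRootSystem Φ) (hΔ : IsBase Φ Δ) {a₀ : E}
    (ha₀ : IsHighestShortRoot Φ Δ a₀) {σ : E} (hdom : isDominant Φ Δ σ)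
    (h : ⟪σ, a₀⟫ < ⟪a₀, a₀⟫) : ∀ β ∈ Φ, ⟪σ, β⟫ < ⟪β, β⟫ := by
  have hshort : ∀ γ ∈ Φ, ⟪γ, γ⟫ = ⟪a₀, a₀⟫ → ⟪σ, γ⟫ < ⟪a₀, a₀⟫ := by
    intro γ hγ hl
    obtain ⟨c, hc⟩ := ha₀.highest γ hγ hl
    have h1 := inner_nonneg_of_dominant hΦ hΔ hdom c
    rw [← hc, inner_sub_right] at h1
    linarith
  intro β hβ
  rcases (ha₀.short β hβ).eq_or_lt with heq | hlt
  · rw [← heq]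
    exact hshort β hβ heq.symm
  obtain ⟨γ, hγ, hγl, hγβ⟩ : ∃ γ ∈ Φ, ⟪γ, γ⟫ = ⟪a₀, a₀⟫ ∧ 0 < ⟪γ, β⟫ := by
    obtain ⟨γ, hγ, hγl, hγβ⟩ := exists_short_not_orthogonal hΦ ha₀.mem hβ
    rcases hγβ.lt_or_gt with h1 | h1
    · exact ⟨-γ, neg_mem hΦ hγ, by simpa using hγl, by simpa using h1⟩
    · exact ⟨γ, hγ, hγl, h1⟩
  have hA := inner_self_pos hΦ ha₀.mem
  obtain ⟨k, hk⟩ := hΦ.pair_int β hβ γ hγ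
  obtain ⟨m, hm⟩ := hΦ.pair_int γ hγ β hβ
  have e1 := pair_mul hΦ hβ γ
  have e2 := pair_mul hΦ hγ β
  rw [hm, hγl, real_inner_comm γ β] at e2
  have hr := hΦ.reflect_mem β hβ γ hγ
  rw [hk] at e1 hr
  have hk0 : 0 < k := by
    by_contra! h0
    have : (k : ℝ) ≤ 0 := by exact_mod_cast h0
    nlinarith
  have hexp := real_inner_sub_sub_self γ β
  have hk2 : k < 2 := by
    by_contra! h0
    have : (2 : ℝ) ≤ k := by exact_mod_cast h0
    have := real_inner_self_nonneg (x := γ - β)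
    nlinarith
  have hk1 : k = 1 := by lia
  rw [hk1, Int.cast_one, one_mul] at e1
  rw [hk1, Int.cast_one, one_smul] at hr
  -- Now `m = (β, β) / (α₀, α₀) > 1` is an integer.
  have hm1 : 1 < m := by
    by_contra! h0
    have : (m : ℝ) ≤ 1 := by exact_mod_cast h0
    nlinarith
  have hm2 : (2 : ℝ) ≤ m := by exact_mod_cast hm1
  have hδ : β - γ ∈ Φ := by simpa using neg_mem hΦ hr
  have s1 := hshort γ hγ hγl
  have s2 := hshort (β - γ) hδ (by
    rw [real_inner_sub_sub_self, real_inner_comm γ β]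
    linarith)
  rw [inner_sub_right] at s2
  nlinarith

/-- Let `σ` be a nonzero dominant weight lying in the root lattice,
i.e. `σ ∈ X⁺ ∩ ℤΦ`, `σ ≠ 0`.  Then `(σ, α₀∨) ≥ 2` where `α₀` is the highest
short root; equivalently, there exists a positive root `α` with `(σ, α∨) ≥ 2`. -/
theorem statement4
    (Φ Δ : Finset E) (hΦ : IsRootSystem Φ) (hΔ : IsBase Φ Δ)
    (a₀ : E) (ha₀ : IsHighestShortRoot Φ Δ a₀)
    (σ : E) (hdom : isDominant Φ Δ σ) (hσΦ : σ ∈ rootLattice Φ) (hne : σ ≠ 0) :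
    2 ≤ pair σ a₀ ∧ ∃ α ∈ posRoots Φ Δ, 2 ≤ pair σ α := by
  have h2 : 2 ≤ pair σ a₀ := by
    by_contra! hlt
    have h1 := pair_mul hΦ ha₀.mem σ
    have hA := inner_self_pos hΦ ha₀.mem
    exact hne (eq_zero_of_inner_lt hΦ hσΦ
      (inner_lt_of_highest hΦ hΔ ha₀ hdom (by nlinarith)))
  refine ⟨h2, a₀, ?_, h2⟩
  classical
  refine Finset.mem_filter.2 ⟨ha₀.mem, ?_⟩
  -- If `a₀` were negative, dominance of `σ` would give `(σ, a₀) ≤ 0`.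
  rcases hΔ.root_decomp a₀ ha₀.mem with h | ⟨c, hc⟩
  · exact h
  · have h1 := inner_nonneg_of_dominant hΦ hΔ hdom c
    rw [← neg_eq_iff_eq_neg.2 hc, inner_neg_right] at h1
    have h3 := pair_mul hΦ ha₀.mem σ
    have hA := inner_self_pos hΦ ha₀.mem
    nlinarith

end PaperDNN
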